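/- arXiv:2505.12760 — 2 statements merged into one kernel-verified Lean document; each statement's English description precedes it below -/
import Mathlib

section
/- Let $1<\alpha,\beta<\infty$, $0<p\leqslant q<\infty$, and $0\leqslant r<1$. If for every function $f$ analytic on the open unit disk $\mathbb{D}$ one has $\|T_r f\|_{A_\beta^q(\mathbb{D})}\leqslant\|f\|_{A_\alpha^p(\mathbb{D})}$, then $r^2\leqslant \beta p/(\alpha q)$. -/
open MeasureTheory Metric

/-- The weighted Bergman measure `dA_α(z) = (α-1)(1-|z|²)^(α-2) dA(z)` on the unit disk,
where `dA = dx dy / π` is the normalized area measure. -/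
noncomputable def bergmanMeasure (α : ℝ) : Measure ℂ :=
  ((volume : Measure ℂ).restrict (ball (0 : ℂ) 1)).withDensity
    fun z => ENNReal.ofReal ((α - 1) * (1 - ‖z‖ ^ 2) ^ (α - 2) / Real.pi)

open Filter ProbabilityTheory
open scoped Topology

/-! The hypothesis is tested on the exponentials `z ↦ exp (ε z)`. For these the `A^p` norm is
`exp (Λ (pε) / p)`, where `Λ` is the cumulant generating function of `Re z`, so contractivity reads
`Λ_β (qε) / q ≤ Λ_α (pε) / p` with `Λ_β` taken for `Re (r z)`. Rotation invariance makes `Re z`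
centred with variance `𝔼 |z|² / 2`, and `𝔼 |z|² = 1 / α` for `dA_α`; dividing by `ε²` and letting
`ε → 0` compares the variances. -/

section Cumulant

theorem tendsto_div_sq_of_deriv_eq_zero {f : ℝ → ℝ} (hf : ∀ᶠ t in 𝓝 0, DifferentiableAt ℝ f t)
    (hf₂ : DifferentiableAt ℝ (deriv f) 0) (hf0 : f 0 = 0) (hf0' : deriv f 0 = 0) :
    Tendsto (fun t => f t / t ^ 2) (𝓝[≠] 0) (𝓝 (iteratedDeriv 2 f 0 / 2)) := by
  have hslope : Tendsto (fun t => t⁻¹ * deriv f t) (𝓝[≠] 0) (𝓝 (iteratedDeriv 2 f 0)) := by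
    have h := hasDerivAt_iff_tendsto_slope_zero.1 hf₂.hasDerivAt
    simpa only [zero_add, hf0', sub_zero, smul_eq_mul, iteratedDeriv_succ, iteratedDeriv_zero]
      using h
  have hquot : Tendsto (fun t => deriv f t / (2 * t)) (𝓝[≠] 0) (𝓝 (iteratedDeriv 2 f 0 / 2)) :=
    (hslope.div_const 2).congr fun t => by rw [inv_mul_eq_div, div_div, mul_comm t]
  refine HasDerivAt.lhopital_zero_nhdsNE ?_ (.of_forall fun t => ?_) ?_ ?_ ?_ hquot
  · filter_upwards [nhdsWithin_le_nhds hf] with t ht using ht.hasDerivAt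
  · simpa using hasDerivAt_pow 2 t
  · filter_upwards [self_mem_nhdsWithin] with t ht using mul_ne_zero two_ne_zero ht
  · simpa only [hf0] using
      hf.self_of_nhds.continuousAt.tendsto.mono_left nhdsWithin_le_nhds
  · exact ((continuous_pow 2).tendsto' 0 0 (zero_pow two_ne_zero)).mono_left nhdsWithin_le_nhds

variable {Ω Ω' : Type*} [MeasurableSpace Ω] [MeasurableSpace Ω'] {μ : Measure Ω} {ν : Measure Ω'}
  {X : Ω → ℝ} {Y : Ω' → ℝ} {p q : ℝ}

theorem lintegral_norm_cexp_rpow [NeZero μ] {Z : Ω → ℂ} {ε : ℝ}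
    (hint : Integrable (fun ω => Real.exp (p * ε * (Z ω).re)) μ) :
    (∫⁻ ω, ENNReal.ofReal (‖Complex.exp (ε * Z ω)‖ ^ p) ∂μ) ^ (1 / p) =
      ENNReal.ofReal (Real.exp (cgf (fun ω => (Z ω).re) μ (p * ε) / p)) := by
  have hnorm : ∀ ω, ‖Complex.exp (ε * Z ω)‖ ^ p = Real.exp (p * ε * (Z ω).re) := fun ω => by
    rw [Complex.norm_exp, ← Real.exp_mul, Complex.re_ofReal_mul]
    ring_nf
  simp only [hnorm]
  rw [← ofReal_integral_eq_lintegral_ofReal hint (.of_forall fun _ => (Real.exp_pos _).le),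
    ← mgf, ← exp_cgf hint, ENNReal.ofReal_rpow_of_pos (Real.exp_pos _), ← Real.exp_mul,
    mul_one_div]

variable [IsProbabilityMeasure μ] [IsProbabilityMeasure ν]

theorem tendsto_cgf_div_sq (hX : 0 ∈ interior (integrableExpSet X μ)) (hmean : μ[X] = 0) :
    Tendsto (fun t => cgf X μ t / t ^ 2) (𝓝[≠] 0) (𝓝 (μ[X ^ 2] / 2)) := by
  have hderiv : deriv (cgf X μ) 0 = 0 := by rw [deriv_cgf_zero hX, hmean, zero_div]
  have hderiv₂ : iteratedDeriv 2 (cgf X μ) 0 = μ[X ^ 2] := by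
    simp [iteratedDeriv_two_cgf hX, hderiv]
  have hana := analyticAt_cgf hX
  exact hderiv₂ ▸ tendsto_div_sq_of_deriv_eq_zero
    (hana.eventually_analyticAt.mono fun _ ht => ht.differentiableAt)
    hana.deriv.differentiableAt cgf_zero hderiv

theorem tendsto_cgf_mul_div_div_sq (hp : p ≠ 0) (hX : 0 ∈ interior (integrableExpSet X μ))
    (hmean : μ[X] = 0) :
    Tendsto (fun ε => cgf X μ (p * ε) / p / ε ^ 2) (𝓝[≠] 0) (𝓝 (p * (μ[X ^ 2] / 2))) := by
  have hscale : Tendsto (fun ε => p * ε) (𝓝[≠] 0) (𝓝[≠] 0) := by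
    refine tendsto_nhdsWithin_iff.2 ⟨?_, ?_⟩
    · exact ((continuous_const_mul p).tendsto' 0 0 (mul_zero p)).mono_left nhdsWithin_le_nhds
    · filter_upwards [self_mem_nhdsWithin] with ε hε using mul_ne_zero hp hε
  refine (((tendsto_cgf_div_sq hX hmean).comp hscale).const_mul p).congr' ?_
  filter_upwards [self_mem_nhdsWithin] with ε (hε : ε ≠ 0)
  simp only [Function.comp_apply]
  field_simp

theorem mul_integral_sq_le_of_cgf_div_le (hp : p ≠ 0) (hq : q ≠ 0)
    (hX : 0 ∈ interior (integrableExpSet X μ)) (hY : 0 ∈ interior (integrableExpSet Y ν))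
    (hXmean : μ[X] = 0) (hYmean : ν[Y] = 0)
    (hle : ∀ᶠ ε in 𝓝[≠] 0, cgf Y ν (q * ε) / q ≤ cgf X μ (p * ε) / p) :
    q * ν[Y ^ 2] ≤ p * μ[X ^ 2] := by
  have hlim : q * (ν[Y ^ 2] / 2) ≤ p * (μ[X ^ 2] / 2) :=
    le_of_tendsto_of_tendsto (tendsto_cgf_mul_div_div_sq hq hY hYmean)
      (tendsto_cgf_mul_div_div_sq hp hX hXmean)
      (hle.mono fun ε hε => div_le_div_of_nonneg_right hε (sq_nonneg ε))
  linarith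

end Cumulant

section QuarterTurn

variable {μ ν : Measure ℂ}

theorem integral_mul_re_eq_zero (hμ : MeasurePreserving (Complex.I * ·) μ μ) (c : ℂ) :
    ∫ z, (c * z).re ∂μ = 0 := by
  have hturn (g : ℂ → ℝ) : ∫ z, g (Complex.I * z) ∂μ = ∫ z, g z ∂μ :=
    hμ.integral_comp (measurableEmbedding_mulLeft₀ Complex.I_ne_zero) g
  have hneg : ∫ z, (c * z).re ∂μ = -∫ z, (c * z).re ∂μ :=
    calc ∫ z, (c * z).re ∂μ
        = ∫ z, (c * (Complex.I * (Complex.I * z))).re ∂μ := by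
          rw [hturn fun z => (c * (Complex.I * z)).re, hturn fun z => (c * z).re]
      _ = -∫ z, (c * z).re ∂μ := by
          rw [← integral_neg]
          congr with z
          simp [← mul_assoc]
  linarith

theorem integral_mul_re_sq (hμ : MeasurePreserving (Complex.I * ·) μ μ)
    (hint : Integrable (fun z => ‖z‖ ^ 2) μ) (c : ℂ) :
    ∫ z, (c * z).re ^ 2 ∂μ = ‖c‖ ^ 2 / 2 * ∫ z, ‖z‖ ^ 2 ∂μ := by
  have hdom : ∀ d : ℂ, Integrable (fun z => (d * z).re ^ 2) μ := fun d => by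
    refine (hint.const_mul (‖d‖ ^ 2)).mono' (by fun_prop) (.of_forall fun z => ?_)
    rw [Real.norm_of_nonneg (sq_nonneg _), ← mul_pow, ← norm_mul, ← sq_abs]
    gcongr
    exact Complex.abs_re_le_norm _
  have hturn : ∫ z, (c * Complex.I * z).re ^ 2 ∂μ = ∫ z, (c * z).re ^ 2 ∂μ := by
    simpa only [mul_assoc] using
      hμ.integral_comp (measurableEmbedding_mulLeft₀ Complex.I_ne_zero) fun z => (c * z).re ^ 2
  have hpythagoras : ∀ z, (c * z).re ^ 2 + (c * Complex.I * z).re ^ 2 = ‖c‖ ^ 2 * ‖z‖ ^ 2 :=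
    fun z => by
      rw [mul_right_comm, Complex.mul_I_re, neg_sq, ← mul_pow, ← norm_mul, Complex.sq_norm,
        Complex.normSq_apply]
      ring
  have hsum := integral_add (hdom c) (hdom (c * Complex.I))
  simp only [hpythagoras] at hsum
  rw [integral_const_mul, hturn] at hsum
  linarith

theorem integrable_exp_mul_re_of_ae_norm_le [IsFiniteMeasure μ] {R : ℝ}
    (hR : ∀ᵐ z ∂μ, ‖z‖ ≤ R) (c : ℂ) (t : ℝ) :
    Integrable (fun z => Real.exp (t * (c * z).re)) μ := by
  refine integrable_exp_mul_of_mem_Icc (a := -(‖c‖ * R)) (b := ‖c‖ * R) (by fun_prop) ?_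
  filter_upwards [hR] with z hz
  refine abs_le.1 ((Complex.abs_re_le_norm _).trans ?_)
  rw [norm_mul]
  gcongr

theorem integrable_norm_sq_of_ae_norm_le {E : Type*} [NormedAddCommGroup E] [MeasurableSpace E]
    [OpensMeasurableSpace E] {μ : Measure E} [IsFiniteMeasure μ] {R : ℝ} (hR : ∀ᵐ z ∂μ, ‖z‖ ≤ R) :
    Integrable (fun z => ‖z‖ ^ 2) μ := by
  refine .of_bound (by fun_prop) (R ^ 2) ?_
  filter_upwards [hR] with z hz
  rw [Real.norm_of_nonneg (sq_nonneg _)]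
  gcongr

theorem mul_integral_norm_sq_le_of_contractive [IsProbabilityMeasure μ] [IsProbabilityMeasure ν]
    {p q R S : ℝ} {r : ℂ} (hp : p ≠ 0) (hq : q ≠ 0)
    (hμ : MeasurePreserving (Complex.I * ·) μ μ) (hν : MeasurePreserving (Complex.I * ·) ν ν)
    (hμR : ∀ᵐ z ∂μ, ‖z‖ ≤ R) (hνS : ∀ᵐ z ∂ν, ‖z‖ ≤ S)
    (H : ∀ f : ℂ → ℂ, Differentiable ℂ f →
      (∫⁻ z, ENNReal.ofReal (‖f (r * z)‖ ^ q) ∂ν) ^ (1 / q) ≤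
        (∫⁻ z, ENNReal.ofReal (‖f z‖ ^ p) ∂μ) ^ (1 / p)) :
    q * (‖r‖ ^ 2 * ∫ z, ‖z‖ ^ 2 ∂ν) ≤ p * ∫ z, ‖z‖ ^ 2 ∂μ := by
  have hexpμ := integrable_exp_mul_re_of_ae_norm_le hμR 1
  have hexpν := integrable_exp_mul_re_of_ae_norm_le hνS r
  have hmean := integral_mul_re_eq_zero hμ 1
  have hvarμ := integral_mul_re_sq hμ (integrable_norm_sq_of_ae_norm_le hμR) 1
  have hvarν := integral_mul_re_sq hν (integrable_norm_sq_of_ae_norm_le hνS) r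
  simp only [one_mul, norm_one, one_pow] at hexpμ hmean hvarμ
  have hcgf : ∀ ε : ℝ, cgf (fun z => (r * z).re) ν (q * ε) / q ≤ cgf Complex.re μ (p * ε) / p := by
    intro ε
    have h := H (fun z => Complex.exp (ε * z)) (by fun_prop)
    rwa [lintegral_norm_cexp_rpow (hexpν _), lintegral_norm_cexp_rpow (hexpμ _),
      ENNReal.ofReal_le_ofReal_iff (Real.exp_pos _).le, Real.exp_le_exp] at h
  have hsetμ : integrableExpSet Complex.re μ = Set.univ := Set.eq_univ_of_forall hexpμ
  have hsetν : integrableExpSet (fun z => (r * z).re) ν = Set.univ := Set.eq_univ_of_forall hexpν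
  have hsq := mul_integral_sq_le_of_cgf_div_le hp hq
    (by simp only [hsetμ, interior_univ, Set.mem_univ])
    (by simp only [hsetν, interior_univ, Set.mem_univ])
    hmean (integral_mul_re_eq_zero hν r) (.of_forall hcgf)
  simp only [Pi.pow_apply, hvarμ, hvarν] at hsq
  linarith

end QuarterTurn

section Bergman

theorem integral_comp_norm_sq (g : ℝ → ℝ) :
    ∫ z : ℂ, g (‖z‖ ^ 2) = Real.pi * ∫ u in Set.Ioi (0 : ℝ), g u := by
  have hpolar : ∫ z : ℂ, g (‖z‖ ^ 2) =
      2 * (Real.pi * ∫ ρ in Set.Ioi (0 : ℝ), ρ * g (ρ ^ 2)) := by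
    simpa [Measure.real, Complex.volume_ball] using
      integral_fun_norm_addHaar (volume : Measure ℂ) fun ρ => g (ρ ^ 2)
  have hsubst : 2 * ∫ ρ in Set.Ioi (0 : ℝ), ρ * g (ρ ^ 2) = ∫ u in Set.Ioi (0 : ℝ), g u := by
    rw [← integral_comp_rpow_Ioi_of_pos (g := g) two_pos, ← integral_const_mul]
    norm_num [mul_assoc]
  rw [hpolar, mul_left_comm, hsubst]

theorem setIntegral_ball_one_sub_norm_sq_rpow {s : ℝ} (hs : -1 < s) :
    ∫ z in ball (0 : ℂ) 1, (1 - ‖z‖ ^ 2) ^ s = Real.pi / (s + 1) := by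
  have hball : (ball (0 : ℂ) 1).indicator (fun z => (1 - ‖z‖ ^ 2) ^ s) =
      fun z => (Set.Iio 1).indicator (fun u => (1 - u) ^ s) (‖z‖ ^ 2) := by
    ext z
    simp [Set.indicator]
  have hradial : ∫ u in (0 : ℝ)..1, (1 - u) ^ s = 1 / (s + 1) := by
    rw [intervalIntegral.integral_comp_sub_left (fun u => u ^ s), sub_self, sub_zero,
      integral_rpow (.inl hs), Real.one_rpow, Real.zero_rpow (by linarith), sub_zero]
  rw [← integral_indicator measurableSet_ball, hball, integral_comp_norm_sq,
    setIntegral_indicator measurableSet_Iio, Set.Ioi_inter_Iio, ← integral_Ioc_eq_integral_Ioo,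
    ← intervalIntegral.integral_of_le zero_le_one, hradial, mul_one_div]

variable {α : ℝ}

theorem one_sub_norm_sq_pos_of_mem_ball {z : ℂ} (hz : z ∈ ball (0 : ℂ) 1) : 0 < 1 - ‖z‖ ^ 2 :=
  sub_pos.2 (pow_lt_one₀ (norm_nonneg z) (mem_ball_zero_iff.1 hz) two_ne_zero)

theorem integral_bergmanMeasure (hα : 1 ≤ α) (g : ℂ → ℝ) :
    ∫ z, g z ∂(bergmanMeasure α) =
      (α - 1) / Real.pi * ∫ z in ball (0 : ℂ) 1, (1 - ‖z‖ ^ 2) ^ (α - 2) * g z := by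
  rw [bergmanMeasure, integral_withDensity_eq_integral_toReal_smul (by fun_prop) (by simp),
    ← integral_const_mul]
  refine setIntegral_congr_fun measurableSet_ball fun z hz => ?_
  have hnorm := one_sub_norm_sq_pos_of_mem_ball hz
  have hdensity : 0 ≤ (α - 1) * (1 - ‖z‖ ^ 2) ^ (α - 2) / Real.pi :=
    div_nonneg (mul_nonneg (sub_nonneg.2 hα) (Real.rpow_nonneg hnorm.le _)) Real.pi_nonneg
  simp only [ENNReal.toReal_ofReal hdensity, smul_eq_mul]
  ring

theorem integral_one_sub_norm_sq_rpow_bergmanMeasure (hα : 1 ≤ α) {s : ℝ} (hs : 1 - α < s) :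
    ∫ z, (1 - ‖z‖ ^ 2) ^ s ∂(bergmanMeasure α) = (α - 1) / (α - 1 + s) := by
  have hmul : ∀ z ∈ ball (0 : ℂ) 1,
      (1 - ‖z‖ ^ 2) ^ (α - 2) * (1 - ‖z‖ ^ 2) ^ s = (1 - ‖z‖ ^ 2) ^ (α - 2 + s) :=
    fun z hz => (Real.rpow_add (one_sub_norm_sq_pos_of_mem_ball hz) _ _).symm
  rw [integral_bergmanMeasure hα, setIntegral_congr_fun measurableSet_ball hmul,
    setIntegral_ball_one_sub_norm_sq_rpow (by linarith)]
  have : α - 1 + s ≠ 0 := by linarith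
  rw [show α - 2 + s + 1 = α - 1 + s by ring]
  field_simp

theorem isProbabilityMeasure_bergmanMeasure (hα : 1 < α) :
    IsProbabilityMeasure (bergmanMeasure α) := by
  have h := integral_one_sub_norm_sq_rpow_bergmanMeasure hα.le (s := 0) (by linarith)
  simpa [isProbabilityMeasure_iff_real, (sub_pos.2 hα).ne'] using h

theorem ae_norm_le_one_bergmanMeasure (α : ℝ) : ∀ᵐ z ∂(bergmanMeasure α), ‖z‖ ≤ 1 := by
  refine (withDensity_absolutelyContinuous _ _).ae_le ?_
  filter_upwards [ae_restrict_mem measurableSet_ball] with z hz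
  exact (mem_ball_zero_iff.1 hz).le

theorem integral_norm_sq_bergmanMeasure (hα : 1 < α) :
    ∫ z, ‖z‖ ^ 2 ∂(bergmanMeasure α) = 1 / α := by
  have := isProbabilityMeasure_bergmanMeasure hα
  have h := integral_one_sub_norm_sq_rpow_bergmanMeasure hα.le (s := 1) (by linarith)
  simp only [Real.rpow_one, sub_add_cancel] at h
  rw [integral_sub (integrable_const _)
    (integrable_norm_sq_of_ae_norm_le (ae_norm_le_one_bergmanMeasure α)), integral_const,
    probReal_univ, one_smul, sub_div, div_self (by linarith)] at h
  linarith

theorem measurePreserving_withDensity_comp {E F : Type*} [MeasurableSpace E] [MeasurableSpace F]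
    {μ : Measure E} {ν : Measure F} {T : E → F} (hT : MeasurePreserving T μ ν)
    (hemb : MeasurableEmbedding T) (ρ : F → ENNReal) :
    MeasurePreserving T (μ.withDensity (ρ ∘ T)) (ν.withDensity ρ) := by
  refine ⟨hT.measurable, Measure.ext fun s hs => ?_⟩
  rw [Measure.map_apply hT.measurable hs, withDensity_apply _ (hT.measurable hs),
    withDensity_apply _ hs]
  exact hT.setLIntegral_comp_preimage_emb hemb ρ s

theorem measurePreserving_bergmanMeasure (α : ℝ) (L : ℂ ≃ₗᵢ[ℝ] ℂ) :
    MeasurePreserving L (bergmanMeasure α) (bergmanMeasure α) := by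
  have hemb : MeasurableEmbedding L := L.toHomeomorph.measurableEmbedding
  simpa [bergmanMeasure, Function.comp_def] using measurePreserving_withDensity_comp
    (L.measurePreserving.restrict_preimage_emb hemb (ball 0 1)) hemb
    fun z => ENNReal.ofReal ((α - 1) * (1 - ‖z‖ ^ 2) ^ (α - 2) / Real.pi)

end Bergman

theorem hypercontractive_necessity_general {α β p q : ℝ} (hα : 1 < α) (hβ : 1 < β)
    (hp : 0 < p) (hq : 0 < q) {r : ℂ}
    (H : ∀ f : ℂ → ℂ, Differentiable ℂ f →
      (∫⁻ z, ENNReal.ofReal (‖f (r * z)‖ ^ q) ∂(bergmanMeasure β)) ^ (1 / q) ≤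
        (∫⁻ z, ENNReal.ofReal (‖f z‖ ^ p) ∂(bergmanMeasure α)) ^ (1 / p)) :
    ‖r‖ ^ 2 ≤ β * p / (α * q) := by
  have := isProbabilityMeasure_bergmanMeasure hα
  have := isProbabilityMeasure_bergmanMeasure hβ
  have hturn (γ : ℝ) : MeasurePreserving (Complex.I * ·) (bergmanMeasure γ) (bergmanMeasure γ) :=
    measurePreserving_bergmanMeasure γ (rotation ⟨Complex.I, by simp [Submonoid.unitSphere]⟩)
  have hmoments := mul_integral_norm_sq_le_of_contractive hp.ne' hq.ne' (hturn α) (hturn β)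
    (ae_norm_le_one_bergmanMeasure α) (ae_norm_le_one_bergmanMeasure β) H
  rw [integral_norm_sq_bergmanMeasure hα, integral_norm_sq_bergmanMeasure hβ, mul_one_div,
    mul_one_div, mul_div_assoc', div_le_div_iff₀ (by linarith) (by linarith)] at hmoments
  rw [le_div_iff₀ (by positivity)]
  linarith

/-- Necessity in Theorem 1.1: if `‖T_r f‖_{A_β^q} ≤ ‖f‖_{A_α^p}` for every analytic `f`
on the unit disk, then `r² ≤ βp/(αq)`. -/
theorem hypercontractive_necessity
    (α β p q : ℝ) (hα : 1 < α) (hβ : 1 < β) (hp : 0 < p) (hpq : p ≤ q)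
    (r : ℝ) (hr0 : 0 ≤ r) (hr1 : r < 1)
    (H : ∀ f : ℂ → ℂ, AnalyticOnNhd ℂ f (ball (0 : ℂ) 1) →
      (∫⁻ z, ENNReal.ofReal (‖f ((r : ℂ) * z)‖ ^ q) ∂(bergmanMeasure β)) ^ (1 / q) ≤
        (∫⁻ z, ENNReal.ofReal (‖f z‖ ^ p) ∂(bergmanMeasure α)) ^ (1 / p)) :
    r ^ 2 ≤ β * p / (α * q) := by
  simpa using hypercontractive_necessity_general hα hβ hp (hp.trans_le hpq) (r := r)
    fun f hf => H f fun z _ => hf.analyticAt z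
end

section
/- Let $1<\beta\leqslant\beta'<\infty$ and set $r=\sqrt{\beta/\beta'}$. Let $\Phi:[0,1]\to\mathbb{R}$ be twice continuously differentiable with $\Phi''(y)\geqslant 0$ for all $y\in[0,1]$. Then $(\beta-1)\int_0^1(1-y)^{\beta-2}\,\Phi(r^2y)\,dy\;\leqslant\;(\beta'-1)\int_0^1(1-y)^{\beta'-2}\,\Phi(y)\,dy$. -/
open Set intervalIntegral

/-!
Put `s = β / β' = r ^ 2` and `θ = (β - 1) / (β' - 1)`. The substitution `y ↦ 1 - (1 - y) ^ θ` turns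
the weight `(β' - 1) * (1 - y) ^ (β' - 2)` into `(β - 1) * (1 - y) ^ (β - 2)`, so the two sides are
the integrals of `Φ (s * y)` and `Φ (1 - (1 - y) ^ θ)` against the same weight. These two arguments
of `Φ` have the same mean `1 / β'`, and their difference is convex and vanishes at `0`, hence it
passes from nonpositive to nonnegative at some `y₀`. Convexity of `Φ` gives
`m * (Y - X) ≤ Φ Y - Φ X` for `X = s * y`, `Y = 1 - (1 - y) ^ θ` and `m` the slope of a support line
at `s * y₀`; integrating, the left side contributes `0` (Ohlin's lemma).
-/

section Convex

variable {φ : ℝ → ℝ}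

lemma exists_forall_add_mul_sub_le_of_convexOn {s : Set ℝ} (hφ : ConvexOn ℝ s φ) {c : ℝ}
    (hc : c ∈ interior s) : ∃ m, ∀ x ∈ s, φ c + m * (x - c) ≤ φ x := by
  refine ⟨derivWithin φ (Ioi c) c, fun x hx => ?_⟩
  rcases lt_trichotomy x c with hxc | rfl | hcx
  · have hslope := (hφ.slope_le_leftDeriv_of_mem_interior hx hc hxc).trans
      (hφ.leftDeriv_le_rightDeriv_of_mem_interior hc)
    rw [slope_def_field, div_le_iff₀ (sub_pos.2 hxc)] at hslope
    linarith
  · simp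
  · have hslope := hφ.rightDeriv_le_slope_of_mem_interior hc hx hcx
    rw [slope_def_field, le_div_iff₀ (sub_pos.2 hcx)] at hslope
    linarith

lemma exists_forall_mul_sub_le_sub_of_convexOn {s : Set ℝ} (hφ : ConvexOn ℝ s φ) {c : ℝ}
    (hc : c ∈ interior s) :
    ∃ m, ∀ x ∈ s, ∀ y ∈ s, (y ≤ x ∧ x ≤ c ∨ c ≤ x ∧ x ≤ y) → m * (y - x) ≤ φ y - φ x := by
  obtain ⟨m, hm⟩ := exists_forall_add_mul_sub_le_of_convexOn hφ hc
  have htilt : ConvexOn ℝ s fun x => φ x - m * x :=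
    hφ.sub ((LinearMap.mulLeft ℝ m).concaveOn hφ.1)
  have hcs := interior_subset hc
  refine ⟨m, fun x hx y hy hcut => ?_⟩
  have hmin : φ c - m * c ≤ φ x - m * x := by linarith [hm x hx]
  have hle : φ x - m * x ≤ φ y - m * y := by
    rcases hcut with ⟨hyx, hxc⟩ | ⟨hcx, hxy⟩
    · rcases hxc.eq_or_lt with rfl | hxc
      · linarith [hm y hy]
      · exact htilt.le_left_of_right_le'' hy hcs hyx hxc hmin
    · rcases hcx.eq_or_lt with rfl | hcx
      · linarith [hm y hy]
      · exact htilt.le_right_of_left_le'' hcs hy hcx hxy hmin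
  linarith

lemma exists_forall_abs_le_of_convexOn_Icc {a b : ℝ} (hφ : ConvexOn ℝ (Icc a b) φ) :
    ∃ C, ∀ x ∈ Icc a b, |φ x| ≤ C := by
  obtain ⟨M, hM⟩ : ∃ M, ∀ x ∈ Icc a b, φ x ≤ M := ⟨max (φ a) (φ b), fun x hx =>
    have hab := hx.1.trans hx.2
    hφ.le_max_of_mem_Icc (left_mem_Icc.2 hab) (right_mem_Icc.2 hab) hx⟩
  refine ⟨max M (M - 2 * φ ((a + b) / 2)), fun x hx => ?_⟩
  have hreflect : a + b - x ∈ Icc a b := ⟨by linarith [hx.2], by linarith [hx.1]⟩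
  have hmid : φ ((a + b) / 2) ≤ (φ x + φ (a + b - x)) / 2 := by
    have h := hφ.2 hx hreflect one_half_pos.le one_half_pos.le (add_halves 1)
    simp only [smul_eq_mul] at h
    calc φ ((a + b) / 2) = φ (1 / 2 * x + 1 / 2 * (a + b - x)) := by ring_nf
      _ ≤ (φ x + φ (a + b - x)) / 2 := by linarith
  exact abs_le'.2 ⟨le_max_of_le_left (hM x hx),
    le_max_of_le_right (by linarith [hM _ hreflect])⟩

end Convex

section ConvexOrder

open MeasureTheory

variable {a b : ℝ} {w X Y φ : ℝ → ℝ}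

lemma intervalIntegrable_mul_comp_of_convexOn_Icc {p q : ℝ} (hab : a ≤ b)
    (hφ : ConvexOn ℝ (Icc p q) φ) (hw : IntervalIntegrable w volume a b)
    (hX : ContinuousOn X (Ioo a b)) (hmaps : MapsTo X (Ioo a b) (Ioo p q)) :
    IntervalIntegrable (fun t => w t * φ (X t)) volume a b := by
  rw [intervalIntegrable_iff_integrableOn_Ioo_of_le hab] at hw ⊢
  obtain ⟨C, hC⟩ := exists_forall_abs_le_of_convexOn_Icc hφ
  have hcont : ContinuousOn φ (Ioo p q) := interior_Icc (a := p) (b := q) ▸ hφ.continuousOn_interior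
  exact hw.mul_bdd ((hcont.comp hX hmaps).aestronglyMeasurable measurableSet_Ioo)
    (ae_restrict_of_forall_mem measurableSet_Ioo fun t ht =>
      hC _ (Ioo_subset_Icc_self (hmaps ht)))

lemma integral_mul_comp_le_of_cut {s : Set ℝ} {c : ℝ} (hab : a ≤ b)
    (hφ : ConvexOn ℝ s φ) (hw : ∀ t ∈ Ioo a b, 0 ≤ w t)
    (hXs : MapsTo X (Ioo a b) s) (hYs : MapsTo Y (Ioo a b) s)
    (hX : IntervalIntegrable (fun t => w t * X t) volume a b)
    (hY : IntervalIntegrable (fun t => w t * Y t) volume a b)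
    (hφX : IntervalIntegrable (fun t => w t * φ (X t)) volume a b)
    (hφY : IntervalIntegrable (fun t => w t * φ (Y t)) volume a b)
    (hmean : ∫ t in a..b, w t * X t = ∫ t in a..b, w t * Y t)
    (hc : c ∈ interior s)
    (hcut : ∀ t ∈ Ioo a b, Y t ≤ X t ∧ X t ≤ c ∨ c ≤ X t ∧ X t ≤ Y t) :
    ∫ t in a..b, w t * φ (X t) ≤ ∫ t in a..b, w t * φ (Y t) := by
  obtain ⟨m, hm⟩ := exists_forall_mul_sub_le_sub_of_convexOn hφ hc
  have hpointwise : ∀ t ∈ Ioo a b,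
      m * (w t * Y t - w t * X t) ≤ w t * φ (Y t) - w t * φ (X t) := fun t ht => by
    linarith [mul_le_mul_of_nonneg_left (hm _ (hXs ht) _ (hYs ht) (hcut t ht)) (hw t ht)]
  refine sub_nonneg.1 ?_
  calc 0 = ∫ t in a..b, m * (w t * Y t - w t * X t) := by
        rw [intervalIntegral.integral_const_mul, intervalIntegral.integral_sub hY hX, hmean,
          sub_self, mul_zero]
    _ ≤ ∫ t in a..b, (w t * φ (Y t) - w t * φ (X t)) :=
        integral_mono_on_of_le_Ioo hab ((hY.sub hX).const_mul m) (hφY.sub hφX) hpointwise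
    _ = _ := intervalIntegral.integral_sub hφY hφX

lemma exists_mem_Ioo_eq_zero_of_integral_mul_eq_zero {h : ℝ → ℝ} (hab : a < b)
    (hw : ∀ t ∈ Ioo a b, 0 < w t) (hwi : IntervalIntegrable w volume a b)
    (hh : ContinuousOn h (Icc a b)) (hzero : ∫ t in a..b, w t * h t = 0) :
    ∃ c ∈ Ioo a b, h c = 0 := by
  have hpos : 0 < ∫ t in a..b, w t := intervalIntegral_pos_of_pos_on hwi hw hab
  have hwh := hwi.continuousOn_mul (uIcc_of_le hab.le ▸ hh)
  rw [intervalIntegrable_iff_integrableOn_Ioo_of_le hab.le] at hwi hwh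
  obtain ⟨c, hc, hmean⟩ := exists_eq_const_mul_setIntegral_of_nonneg (isConnected_Ioo hab)
    measurableSet_Ioo (hh.mono Ioo_subset_Icc_self) hwi hwh fun t ht => (hw t ht).le
  simp only [mul_comm (h _) (w _), ← integral_Ioc_eq_integral_Ioo, ← integral_of_le hab.le,
    hzero] at hmean
  exact ⟨c, hc, (mul_eq_zero.1 hmean.symm).resolve_right hpos.ne'⟩

lemma integral_mul_comp_le_of_convexOn_sub {p q : ℝ} (hab : a < b)
    (hφ : ConvexOn ℝ (Icc p q) φ)
    (hw : ∀ t ∈ Ioo a b, 0 < w t) (hwi : IntervalIntegrable w volume a b)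
    (hX : ContinuousOn X (Icc a b)) (hY : ContinuousOn Y (Icc a b))
    (hXpq : MapsTo X (Ioo a b) (Ioo p q)) (hYpq : MapsTo Y (Ioo a b) (Ioo p q))
    (hXmono : MonotoneOn X (Icc a b)) (hYX : ConvexOn ℝ (Icc a b) fun t => Y t - X t)
    (hstart : Y a ≤ X a)
    (hmean : ∫ t in a..b, w t * X t = ∫ t in a..b, w t * Y t) :
    ∫ t in a..b, w t * φ (X t) ≤ ∫ t in a..b, w t * φ (Y t) := by
  have hwX := hwi.mul_continuousOn (uIcc_of_le hab.le ▸ hX)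
  have hwY := hwi.mul_continuousOn (uIcc_of_le hab.le ▸ hY)
  obtain ⟨c, hc, hcross⟩ : ∃ c ∈ Ioo a b, Y c - X c = 0 := by
    refine exists_mem_Ioo_eq_zero_of_integral_mul_eq_zero hab hw hwi (hY.sub hX) ?_
    simp only [mul_sub]
    rw [intervalIntegral.integral_sub hwY hwX, hmean, sub_self]
  have ha := left_mem_Icc.2 hab.le
  have hcI := Ioo_subset_Icc_self hc
  refine integral_mul_comp_le_of_cut hab.le hφ (fun t ht => (hw t ht).le)
    (hXpq.mono_right Ioo_subset_Icc_self) (hYpq.mono_right Ioo_subset_Icc_self) hwX hwY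
    (intervalIntegrable_mul_comp_of_convexOn_Icc hab.le hφ hwi
      (hX.mono Ioo_subset_Icc_self) hXpq)
    (intervalIntegrable_mul_comp_of_convexOn_Icc hab.le hφ hwi
      (hY.mono Ioo_subset_Icc_self) hYpq)
    hmean (c := X c) (interior_Icc (a := p) (b := q) ▸ hXpq hc) fun t ht => ?_
  have htI := Ioo_subset_Icc_self ht
  rcases le_total t c with htc | hct
  · have hle := hYX.le_max_of_mem_Icc ha hcI ⟨ht.1.le, htc⟩
    rw [hcross, max_eq_right (sub_nonpos.2 hstart), sub_nonpos] at hle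
    exact .inl ⟨hle, hXmono htI hcI htc⟩
  · have hle := hYX.le_right_of_left_le'' ha htI hc.1 hct (by linarith)
    exact .inr ⟨hXmono hcI htI hct, sub_nonneg.1 (hcross ▸ hle)⟩

end ConvexOrder

section OneSubRpow

open MeasureTheory

variable {c θ : ℝ}

lemma intervalIntegrable_one_sub_rpow {a b p : ℝ} (hp : -1 < p) :
    IntervalIntegrable (fun y : ℝ => (1 - y) ^ p) volume a b := by
  simpa only [sub_sub_cancel] using
    (intervalIntegrable_rpow' (a := 1 - a) (b := 1 - b) hp).comp_sub_left 1

lemma mul_integral_one_sub_rpow_mul_id (hc : 0 < c) :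
    c * ∫ y in (0 : ℝ)..1, (1 - y) ^ (c - 1) * y = 1 / (c + 1) := by
  have hexpand : ∀ u ∈ uIcc (0 : ℝ) 1, u ^ (c - 1) * (1 - u) = u ^ (c - 1) - u ^ c := by
    intro u hu
    have hpow := Real.rpow_add_one' (y := c - 1) (uIcc_of_le (zero_le_one' ℝ) ▸ hu).1 (by linarith)
    rw [sub_add_cancel] at hpow
    rw [hpow]
    ring
  have hreflect := integral_comp_sub_left (a := 0) (b := 1)
    (fun u : ℝ => u ^ (c - 1) * (1 - u)) 1
  simp only [sub_sub_cancel, sub_self, sub_zero] at hreflect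
  rw [hreflect, integral_congr hexpand, intervalIntegral.integral_sub
    (intervalIntegrable_rpow' (by linarith)) (intervalIntegrable_rpow' (by linarith)),
    integral_rpow (.inl (by linarith)), integral_rpow (.inl (by linarith)), sub_add_cancel,
    Real.zero_rpow hc.ne', Real.zero_rpow (by positivity), Real.one_rpow, Real.one_rpow]
  field_simp
  ring

lemma bijOn_one_sub_one_sub_rpow (hθ : 0 < θ) :
    BijOn (fun y : ℝ => 1 - (1 - y) ^ θ) (Ioo 0 1) (Ioo 0 1) := by
  have hmaps : ∀ {p : ℝ}, 0 < p → MapsTo (fun y : ℝ => 1 - (1 - y) ^ p) (Ioo 0 1) (Ioo 0 1) :=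
    fun hp y hy =>
      ⟨sub_pos.2 (Real.rpow_lt_one (sub_nonneg.2 hy.2.le) (sub_lt_self _ hy.1) hp),
        sub_lt_self _ (Real.rpow_pos_of_pos (sub_pos.2 hy.2) _)⟩
  refine InvOn.bijOn (f' := fun y => 1 - (1 - y) ^ θ⁻¹) ⟨fun y hy => ?_, fun y hy => ?_⟩
    (hmaps hθ) (hmaps (inv_pos.2 hθ))
  · simp only [sub_sub_cancel, Real.rpow_rpow_inv (sub_nonneg.2 hy.2.le) hθ.ne']
  · simp only [sub_sub_cancel, Real.rpow_inv_rpow (sub_nonneg.2 hy.2.le) hθ.ne']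

lemma convexOn_one_sub_one_sub_rpow (hθ : 0 ≤ θ) (hθ1 : θ ≤ 1) :
    ConvexOn ℝ (Iic 1) fun y : ℝ => 1 - (1 - y) ^ θ := by
  have hpow : ConcaveOn ℝ (Iic 1) fun y : ℝ => (1 - y) ^ θ :=
    ((Real.concaveOn_rpow hθ hθ1).comp_affineMap
      (AffineMap.const ℝ ℝ 1 - AffineMap.id ℝ ℝ)).subset
      (fun _ hy => mem_Ici.2 (sub_nonneg.2 hy)) (convex_Iic 1)
  exact (convexOn_const 1 (convex_Iic 1)).sub hpow

lemma mul_integral_one_sub_rpow_mul_comp (hθ : 0 < θ) (F : ℝ → ℝ) :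
    c * ∫ y in (0 : ℝ)..1, (1 - y) ^ (c - 1) * F (1 - (1 - y) ^ θ) =
      c / θ * ∫ y in (0 : ℝ)..1, (1 - y) ^ (c / θ - 1) * F y := by
  have hbij := bijOn_one_sub_one_sub_rpow hθ
  have hderiv : ∀ y ∈ Ioo (0 : ℝ) 1,
      HasDerivWithinAt (fun y : ℝ => 1 - (1 - y) ^ θ) (θ * (1 - y) ^ (θ - 1)) (Ioo 0 1) y := by
    intro y hy
    have h := (((hasDerivAt_id y).const_sub 1).rpow_const (p := θ)
      (.inl (sub_pos.2 hy.2).ne')).const_sub 1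
    exact (h.congr_deriv (by simp)).hasDerivWithinAt
  have hsubst := integral_image_eq_integral_abs_deriv_smul measurableSet_Ioo hderiv hbij.injOn
    fun y => (1 - y) ^ (c / θ - 1) * F y
  rw [hbij.image_eq] at hsubst
  simp only [integral_of_le zero_le_one, integral_Ioc_eq_integral_Ioo]
  rw [hsubst, ← MeasureTheory.integral_const_mul, ← MeasureTheory.integral_const_mul]
  refine setIntegral_congr_fun measurableSet_Ioo fun y hy => ?_
  have hy' : 0 < 1 - y := sub_pos.2 hy.2
  have hpow : (1 - y) ^ (c - 1) = (1 - y) ^ (θ - 1) * ((1 - y) ^ θ) ^ (c / θ - 1) := by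
    rw [← Real.rpow_mul hy'.le, ← Real.rpow_add hy']
    congr 1
    field_simp
    ring
  simp only [smul_eq_mul, sub_sub_cancel, abs_of_nonneg
    (mul_nonneg hθ.le (Real.rpow_nonneg hy'.le _)), hpow]
  field_simp

end OneSubRpow

lemma mul_integral_one_sub_rpow_mul_comp_mul_le {c c' : ℝ} {Φ : ℝ → ℝ}
    (hc : 0 < c) (hcc' : c ≤ c') (hΦ : ConvexOn ℝ (Icc 0 1) Φ) :
    c * ∫ y in (0 : ℝ)..1, (1 - y) ^ (c - 1) * Φ ((c + 1) / (c' + 1) * y) ≤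
      c' * ∫ y in (0 : ℝ)..1, (1 - y) ^ (c' - 1) * Φ y := by
  have hc' : 0 < c' := hc.trans_le hcc'
  obtain ⟨s, hs⟩ : ∃ s, s = (c + 1) / (c' + 1) := ⟨_, rfl⟩
  obtain ⟨θ, hθ⟩ : ∃ θ, θ = c / c' := ⟨_, rfl⟩
  have hs0 : 0 < s := by rw [hs]; positivity
  have hs1 : s ≤ 1 := hs ▸ div_le_one_of_le₀ (by linarith) (by positivity)
  have hθ0 : 0 < θ := hθ ▸ div_pos hc hc'
  have hθ1 : θ ≤ 1 := hθ ▸ div_le_one_of_le₀ hcc' hc'.le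
  have hcθ : c / θ = c' := by rw [hθ]; field_simp
  have hreparam := mul_integral_one_sub_rpow_mul_comp (c := c) hθ0
  rw [hcθ] at hreparam
  have hmean : ∫ y in (0 : ℝ)..1, (1 - y) ^ (c - 1) * (s * y) =
      ∫ y in (0 : ℝ)..1, (1 - y) ^ (c - 1) * (1 - (1 - y) ^ θ) := by
    refine mul_left_cancel₀ hc.ne' ?_
    rw [hreparam fun y => y, mul_integral_one_sub_rpow_mul_id hc']
    simp only [mul_left_comm _ s, intervalIntegral.integral_const_mul]
    rw [mul_integral_one_sub_rpow_mul_id hc, hs]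
    field_simp
  have hscale : MapsTo (s * ·) (Ioo (0 : ℝ) 1) (Ioo 0 1) := fun y hy =>
    ⟨mul_pos hs0 hy.1, (mul_le_of_le_one_left hy.1.le hs1).trans_lt hy.2⟩
  have hcont : Continuous fun y : ℝ => 1 - (1 - y) ^ θ :=
    continuous_const.sub ((continuous_const.sub continuous_id).rpow_const fun _ => .inr hθ0.le)
  have hsub : ConvexOn ℝ (Icc 0 1) fun y : ℝ => 1 - (1 - y) ^ θ - s * y :=
    ((convexOn_one_sub_one_sub_rpow hθ0.le hθ1).subset Icc_subset_Iic_self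
      (convex_Icc 0 1)).sub ((LinearMap.mulLeft ℝ s).concaveOn (convex_Icc 0 1))
  rw [← hs, ← hreparam]
  exact mul_le_mul_of_nonneg_left (integral_mul_comp_le_of_convexOn_sub zero_lt_one hΦ
    (fun y hy => Real.rpow_pos_of_pos (sub_pos.2 hy.2) _)
    (intervalIntegrable_one_sub_rpow (by linarith))
    (by fun_prop) hcont.continuousOn hscale (bijOn_one_sub_one_sub_rpow hθ0).mapsTo
    ((monotone_id.const_mul hs0.le).monotoneOn _) hsub (by simp) hmean) hc.le

theorem weighted_integral_ineq_general
    (β β' : ℝ) (hβ : 1 < β) (hββ' : β ≤ β')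
    (r : ℝ) (hr : r = Real.sqrt (β / β'))
    (Φ : ℝ → ℝ) (hΦ : ConvexOn ℝ (Icc 0 1) Φ) :
    (β - 1) * ∫ y in (0 : ℝ)..1, (1 - y) ^ (β - 2) * Φ (r ^ 2 * y) ≤
      (β' - 1) * ∫ y in (0 : ℝ)..1, (1 - y) ^ (β' - 2) * Φ y := by
  have hratio : 0 ≤ β / β' := div_nonneg (by linarith) (by linarith)
  have hexponent : ∀ b : ℝ, b - 1 - 1 = b - 2 := fun b => by ring
  have hle := mul_integral_one_sub_rpow_mul_comp_mul_le (sub_pos.2 hβ)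
    (sub_le_sub_right hββ' 1) hΦ
  rwa [hexponent, hexponent, sub_add_cancel, sub_add_cancel, ← Real.sq_sqrt hratio, ← hr] at hle

/-- The key integral inequality in the proof of Theorem 1.1: for `1 < β ≤ β' < ∞`,
`r = √(β/β')`, and `Φ : [0,1] → ℝ` twice continuously differentiable and convex
(`Φ'' ≥ 0`), one has
`(β-1) ∫₀¹ (1-y)^(β-2) Φ(r²y) dy ≤ (β'-1) ∫₀¹ (1-y)^(β'-2) Φ(y) dy`. -/
theorem weighted_integral_ineq
    (β β' : ℝ) (hβ : 1 < β) (hββ' : β ≤ β')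
    (r : ℝ) (hr : r = Real.sqrt (β / β'))
    (Φ Φ' Φ'' : ℝ → ℝ)
    (hΦ' : ∀ y ∈ Icc (0 : ℝ) 1, HasDerivWithinAt Φ (Φ' y) (Icc (0 : ℝ) 1) y)
    (hΦ'' : ∀ y ∈ Icc (0 : ℝ) 1, HasDerivWithinAt Φ' (Φ'' y) (Icc (0 : ℝ) 1) y)
    (hcont : ContinuousOn Φ'' (Icc (0 : ℝ) 1))
    (hconv : ∀ y ∈ Icc (0 : ℝ) 1, 0 ≤ Φ'' y) :
    (β - 1) * ∫ y in (0 : ℝ)..1, (1 - y) ^ (β - 2) * Φ (r ^ 2 * y) ≤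
      (β' - 1) * ∫ y in (0 : ℝ)..1, (1 - y) ^ (β' - 2) * Φ y := by
  have hΦ : ConvexOn ℝ (Icc 0 1) Φ := convexOn_of_hasDerivWithinAt2_nonneg (convex_Icc 0 1)
    (fun y hy => (hΦ' y hy).continuousWithinAt)
    (fun y hy => (hΦ' y (interior_subset hy)).mono interior_subset)
    (fun y hy => (hΦ'' y (interior_subset hy)).mono interior_subset)
    (fun y hy => hconv y (interior_subset hy))
  exact weighted_integral_ineq_general β β' hβ hββ' r hr Φ hΦ
end
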